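/- Let M be the 27 × 27 integer matrix obtained by stacking vertically the three Kronecker products r ⊗ I₃ ⊗ I₃, I₃ ⊗ r ⊗ I₃, and I₃ ⊗ I₃ ⊗ r, where I₃ is the 3 × 3 identity matrix and r = (1, 1, 1). Let x_p = (0,0,0,1,52,1,0,0,0,0,53,1,52,2704,52,0,54,53,0,0,0,1,106,1,1,0,1) ∈ ℤ²⁷. Then the set of vectors x ∈ ℤ²⁷ with all coordinates nonnegative satisfying M x = M x_p and x₂₇ = 1 has exactly 2 elements. -/

import Mathlib

/-!
View a vector of length 27 as a 3 × 3 × 3 array, so that the rows of `M` compute its axis-parallel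
line sums, and let `y = x - x_p` be the difference of two solutions, an array all of whose line sums
vanish. The lines on which `x_p` is zero force zeros of `y` by nonnegativity, and these propagate
until `y` lives on a 2 × 2 × 2 subcube. There an array with zero line sums is determined by one
entry: it is a multiple of the tensor product of three vectors `e_a - e_b`. Nonnegativity of
`x_p + t • w` for this tensor product `w` leaves only `t = 0` and `t = 1`.
-/

open Matrix Kronecker

/-- The 1 × 3 all-ones row vector `r = (1, 1, 1)`. -/
def rOnes : Matrix (Fin 1) (Fin 3) ℤ := Matrix.of fun _ _ => 1

/-- Lexicographic identification of index triples `(i₁, i₂, i₃)` with `Fin 27`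
(first coordinate most significant), matching the lexicographic ordering of the triples
`(i₁, i₂, i₃) ∈ {1, 2, 3}³` used to index the 27 coordinates. -/
def colEquiv : (Fin 3 × Fin 3) × Fin 3 ≃ Fin 27 :=
  (Equiv.prodCongr finProdFinEquiv (Equiv.refl (Fin 3))).trans finProdFinEquiv

def rowEquiv1 : (Fin 1 × Fin 3) × Fin 3 ≃ Fin 9 :=
  (Equiv.prodCongr finProdFinEquiv (Equiv.refl (Fin 3))).trans finProdFinEquiv

def rowEquiv2 : (Fin 3 × Fin 1) × Fin 3 ≃ Fin 9 :=
  (Equiv.prodCongr finProdFinEquiv (Equiv.refl (Fin 3))).trans finProdFinEquiv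

def rowEquiv3 : (Fin 3 × Fin 3) × Fin 1 ≃ Fin 9 :=
  (Equiv.prodCongr finProdFinEquiv (Equiv.refl (Fin 1))).trans finProdFinEquiv

/-- The 27 × 27 matrix obtained by stacking vertically the three Kronecker products
`r ⊗ I₃ ⊗ I₃`, `I₃ ⊗ r ⊗ I₃` and `I₃ ⊗ I₃ ⊗ r`, where `I₃` is the 3 × 3 identity matrix and
`r = (1, 1, 1)` is the 1 × 3 all-ones row, with columns indexed lexicographically by triples. -/
def M : Matrix (Fin 27) (Fin 27) ℤ :=
  Matrix.reindex
    ((rowEquiv1.sumCongr (rowEquiv2.sumCongr rowEquiv3)).trans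
      (((Equiv.refl (Fin 9)).sumCongr finSumFinEquiv).trans finSumFinEquiv))
    colEquiv
    (Matrix.fromRows
      (rOnes ⊗ₖ (1 : Matrix (Fin 3) (Fin 3) ℤ) ⊗ₖ (1 : Matrix (Fin 3) (Fin 3) ℤ))
      (Matrix.fromRows
        ((1 : Matrix (Fin 3) (Fin 3) ℤ) ⊗ₖ rOnes ⊗ₖ (1 : Matrix (Fin 3) (Fin 3) ℤ))
        ((1 : Matrix (Fin 3) (Fin 3) ℤ) ⊗ₖ (1 : Matrix (Fin 3) (Fin 3) ℤ) ⊗ₖ rOnes)))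

/-- The particular solution of block 321 (coordinates indexed lexicographically by triples,
coordinate 27 corresponding to (3,3,3)). -/
def xp : Fin 27 → ℤ := ![0,0,0,1,52,1,0,0,0,0,53,1,52,2704,52,0,54,53,0,0,0,1,106,1,1,0,1]

section ZeroLineSums

variable {ι κ μ R : Type*}

/-- The vector `e_a - e_b`, which is zero if `a = b`. They span the vectors with sum zero. -/
def dipole [DecidableEq ι] [NonAssocRing R] (a b : ι) : ι → R := Pi.single a 1 - Pi.single b 1

/-- The three-dimensional array with entries `u i * v j * w k`. The index type is nested as in the
iterated Kronecker product of matrices. -/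
def tensor [Mul R] (u : ι → R) (v : κ → R) (w : μ → R) (p : (ι × κ) × μ) : R :=
  u p.1.1 * v p.1.2 * w p.2

variable [Fintype ι] [Fintype κ] [Fintype μ]

lemma eq_zero_of_sum_eq_zero_of_ne [AddCommMonoid R] {f : ι → R} (b : ι)
    (hf : ∀ i ≠ b, f i = 0) (hsum : ∑ i, f i = 0) (i : ι) : f i = 0 := by
  rcases eq_or_ne i b with rfl | hi
  · rw [← Fintype.sum_eq_single i hf, hsum]
  · exact hf i hi

lemma sum_dipole [DecidableEq ι] [NonAssocRing R] (a b : ι) : ∑ i, dipole (R := R) a b i = 0 := by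
  simp [dipole]

lemma eq_mul_dipole [DecidableEq ι] [NonAssocRing R] {v : ι → R} (a b : ι)
    (hv : ∀ i, i ≠ a → i ≠ b → v i = 0) (hsum : ∑ i, v i = 0) (i : ι) :
    v i = v a * dipole a b i := by
  refine sub_eq_zero.mp
    (eq_zero_of_sum_eq_zero_of_ne (f := fun i => v i - v a * dipole a b i) b (fun i hib => ?_) ?_ i)
  · rcases eq_or_ne i a with rfl | hia
    · simp [dipole, hib]
    · simp [dipole, hia, hib, hv i hia hib]
  · rw [Finset.sum_sub_distrib, ← Finset.mul_sum, hsum, sum_dipole, mul_zero, sub_zero]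

/-- A three-dimensional array whose sums along all axis-parallel lines vanish. -/
structure HasZeroLineSums [AddCommMonoid R] (y : (ι × κ) × μ → R) : Prop where
  sum_first : ∀ j k, ∑ i, y ((i, j), k) = 0
  sum_second : ∀ i k, ∑ j, y ((i, j), k) = 0
  sum_third : ∀ i j, ∑ k, y ((i, j), k) = 0

lemma hasZeroLineSums_tensor [NonUnitalNonAssocSemiring R] {u : ι → R} {v : κ → R} {w : μ → R}
    (hu : ∑ i, u i = 0) (hv : ∑ j, v j = 0) (hw : ∑ k, w k = 0) :
    HasZeroLineSums (tensor u v w) where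
  sum_first j k := by simp only [tensor, ← Finset.sum_mul, hu, zero_mul]
  sum_second i k := by
    simp only [tensor, ← Finset.sum_mul, ← Finset.mul_sum, hv, mul_zero, zero_mul]
  sum_third i j := by simp only [tensor, ← Finset.mul_sum, hw, mul_zero]

namespace HasZeroLineSums

lemma eq_zero_of_nonneg [AddCommMonoid R] [PartialOrder R] [IsOrderedAddMonoid R]
    {y : (ι × κ) × μ → R} (hy : HasZeroLineSums y) {i : ι} {j : κ}
    (hnonneg : ∀ k, 0 ≤ y ((i, j), k)) (k : μ) : y ((i, j), k) = 0 :=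
  congrFun ((Fintype.sum_eq_zero_iff_of_nonneg hnonneg).mp (hy.sum_third i j)) k

lemma eq_mul_tensor_dipole [DecidableEq ι] [DecidableEq κ] [DecidableEq μ] [CommRing R]
    {y : (ι × κ) × μ → R} (hy : HasZeroLineSums y) (a a' : ι) (b b' : κ) (c c' : μ)
    (hfirst : ∀ i j k, i ≠ a → i ≠ a' → y ((i, j), k) = 0)
    (hsecond : ∀ j k, j ≠ b → j ≠ b' → y ((a, j), k) = 0)
    (hthird : ∀ k, k ≠ c → k ≠ c' → y ((a, b), k) = 0) (p : (ι × κ) × μ) :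
    y p = y ((a, b), c) * tensor (dipole a a') (dipole b b') (dipole c c') p := by
  obtain ⟨⟨i, j⟩, k⟩ := p
  calc y ((i, j), k)
      = y ((a, j), k) * dipole a a' i :=
        eq_mul_dipole a a' (fun i => hfirst i j k) (hy.sum_first j k) i
    _ = y ((a, b), k) * dipole b b' j * dipole a a' i := by
        rw [eq_mul_dipole b b' (fun j => hsecond j k) (hy.sum_second a k) j]
    _ = y ((a, b), c) * dipole c c' k * dipole b b' j * dipole a a' i := by
        rw [eq_mul_dipole c c' hthird (hy.sum_third a b) k]
    _ = y ((a, b), c) * tensor (dipole a a') (dipole b b') (dipole c c') ((i, j), k) := by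
        simp only [tensor]
        ring

end HasZeroLineSums

end ZeroLineSums

section KroneckerMulVec

variable {l ι κ μ R : Type*} [Fintype ι] [Fintype κ] [Fintype μ] [NonAssocSemiring R]

lemma kronecker_one_one_mulVec_apply [DecidableEq κ] [DecidableEq μ] (A : Matrix l ι R)
    (y : (ι × κ) × μ → R) (a : l) (j : κ) (k : μ) :
    ((A ⊗ₖ (1 : Matrix κ κ R) ⊗ₖ (1 : Matrix μ μ R)) *ᵥ y) ((a, j), k) =
      ∑ i, A a i * y ((i, j), k) := by
  simp [mulVec, dotProduct, Fintype.sum_prod_type, one_apply]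

lemma one_kronecker_one_mulVec_apply [DecidableEq ι] [DecidableEq μ] (A : Matrix l κ R)
    (y : (ι × κ) × μ → R) (i : ι) (a : l) (k : μ) :
    (((1 : Matrix ι ι R) ⊗ₖ A ⊗ₖ (1 : Matrix μ μ R)) *ᵥ y) ((i, a), k) =
      ∑ j, A a j * y ((i, j), k) := by
  simp [mulVec, dotProduct, Fintype.sum_prod_type, one_apply]

lemma one_one_kronecker_mulVec_apply [DecidableEq ι] [DecidableEq κ] (A : Matrix l μ R)
    (y : (ι × κ) × μ → R) (i : ι) (j : κ) (a : l) :
    (((1 : Matrix ι ι R) ⊗ₖ (1 : Matrix κ κ R) ⊗ₖ A) *ᵥ y) ((i, j), a) =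
      ∑ k, A a k * y ((i, j), k) := by
  simp [mulVec, dotProduct, Fintype.sum_prod_type, one_apply]

end KroneckerMulVec

lemma M_mulVec_eq_zero_iff (y : Fin 27 → ℤ) :
    M *ᵥ y = 0 ↔ HasZeroLineSums (y ∘ colEquiv) := by
  have hcomp {α β : Type} (e : α ≃ β) (f : β → ℤ) : f ∘ e = 0 ↔ f = 0 :=
    e.surjective.injective_comp_right.eq_iff' rfl
  rw [M, reindex_apply, submatrix_mulVec_equiv, hcomp, Equiv.symm_symm]
  simp only [fromRows_mulVec, funext_iff, Sum.forall, Sum.elim_inl, Sum.elim_inr, Prod.forall,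
    Pi.zero_apply, kronecker_one_one_mulVec_apply, one_kronecker_one_mulVec_apply,
    one_one_kronecker_mulVec_apply, rOnes, of_apply, one_mul, forall_const]
  exact ⟨fun ⟨h₁, h₂, h₃⟩ => ⟨h₁, h₂, h₃⟩, fun h => ⟨h.sum_first, h.sum_second, h.sum_third⟩⟩

/-- The direction in which the solutions of block 321 vary. Its indices `0, 1, 2` stand for the
indices `1, 2, 3` of the paper's triples. -/
def switching : Fin 27 → ℤ := tensor (dipole 2 1) (dipole 2 1) (dipole 1 0) ∘ colEquiv.symm

lemma M_mulVec_switching : M *ᵥ switching = 0 := by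
  rw [M_mulVec_eq_zero_iff, switching, Function.comp_assoc, Equiv.symm_comp_self,
    Function.comp_id]
  exact hasZeroLineSums_tensor (sum_dipole 2 1) (sum_dipole 2 1) (sum_dipole 1 0)

lemma nonneg_xp_add_smul_switching_iff (t : ℤ) : 0 ≤ xp + t • switching ↔ t ∈ Set.Icc 0 1 := by
  constructor
  · intro h
    have h15 : 0 ≤ 0 + t * 1 := h 15
    have h24 : 0 ≤ 1 + t * -1 := h 24
    constructor <;> lia
  · rintro ⟨ht₀, ht₁⟩
    interval_cases t <;> exact fun i => by revert i; decide

section Difference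

variable {y : (Fin 3 × Fin 3) × Fin 3 → ℤ}

lemma HasZeroLineSums.eq_zero_of_xp_eq_zero (hy : HasZeroLineSums y)
    (hnonneg : ∀ p, 0 ≤ xp (colEquiv p) + y p) {i j : Fin 3}
    (hxp : ∀ k, xp (colEquiv ((i, j), k)) = 0) (k : Fin 3) : y ((i, j), k) = 0 :=
  hy.eq_zero_of_nonneg (fun k => by simpa only [hxp, zero_add] using hnonneg ((i, j), k)) k

lemma HasZeroLineSums.apply_first_zero (hy : HasZeroLineSums y)
    (hnonneg : ∀ p, 0 ≤ xp (colEquiv p) + y p) (j k : Fin 3) : y ((0, j), k) = 0 := by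
  refine eq_zero_of_sum_eq_zero_of_ne 1 (fun j hj => ?_) (hy.sum_second 0 k) j
  apply hy.eq_zero_of_xp_eq_zero hnonneg
  revert j
  decide

lemma HasZeroLineSums.apply_second_zero (hy : HasZeroLineSums y)
    (hnonneg : ∀ p, 0 ≤ xp (colEquiv p) + y p) (i k : Fin 3) : y ((i, 0), k) = 0 := by
  refine eq_zero_of_sum_eq_zero_of_ne 1 (fun i hi => ?_) (hy.sum_first 0 k) i
  apply hy.eq_zero_of_xp_eq_zero hnonneg
  revert i
  decide

end Difference

lemma eq_smul_switching {y : Fin 27 → ℤ} (hy : M *ᵥ y = 0) (hnonneg : 0 ≤ xp + y)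
    (h26 : y 26 = 0) : y = y 25 • switching := by
  rw [M_mulVec_eq_zero_iff] at hy
  have hnonneg' (p) : 0 ≤ xp (colEquiv p) + (y ∘ colEquiv) p := hnonneg (colEquiv p)
  have hfirst (i j k) (hi₂ : i ≠ 2) (hi₁ : i ≠ 1) : (y ∘ colEquiv) ((i, j), k) = 0 := by
    obtain rfl : i = 0 := by lia
    exact hy.apply_first_zero hnonneg' j k
  have hsecond (j k) (hj₂ : j ≠ 2) (hj₁ : j ≠ 1) : (y ∘ colEquiv) ((2, j), k) = 0 := by
    obtain rfl : j = 0 := by lia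
    exact hy.apply_second_zero hnonneg' 2 k
  have hthird (k) (hk₁ : k ≠ 1) (hk₀ : k ≠ 0) : (y ∘ colEquiv) ((2, 2), k) = 0 := by
    obtain rfl : k = 2 := by lia
    exact h26
  funext i
  have h25 : colEquiv ((2, 2), 1) = 25 := rfl
  simpa [switching, h25] using
    hy.eq_mul_tensor_dipole 2 1 2 1 1 0 hfirst hsecond hthird (colEquiv.symm i)

lemma solutions_eq_image :
    {x : Fin 27 → ℤ | (∀ i, 0 ≤ x i) ∧ M *ᵥ x = M *ᵥ xp ∧ x 26 = 1} =
      (fun t : ℤ => xp + t • switching) '' Set.Icc 0 1 := by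
  ext x
  constructor
  · rintro ⟨hx, hM, h26⟩
    obtain ⟨t, ht⟩ : ∃ t : ℤ, x - xp = t • switching :=
      ⟨_, eq_smul_switching (by rw [mulVec_sub, hM, sub_self])
        (by rwa [add_sub_cancel]) (by rw [Pi.sub_apply, h26]; rfl)⟩
    obtain rfl : x = xp + t • switching := by rw [← ht, add_sub_cancel]
    exact ⟨t, (nonneg_xp_add_smul_switching_iff t).mp hx, rfl⟩
  · rintro ⟨t, ht, rfl⟩
    refine ⟨(nonneg_xp_add_smul_switching_iff t).mpr ht, ?_, ?_⟩
    · rw [mulVec_add, mulVec_smul, M_mulVec_switching, smul_zero, add_zero]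
    · change 1 + t * 0 = 1
      rw [mul_zero, add_zero]

/-- The set of nonnegative integer vectors \`x\` with \`M x = M x_p\` and \`x₂₇ = 1\` (block 321) has exactly 2 elements. -/
theorem block321_solution_count :
    {x : Fin 27 → ℤ | (∀ i, 0 ≤ x i) ∧ M.mulVec x = M.mulVec xp ∧ x 26 = 1}.ncard = 2 := by
  have hne : switching ≠ 0 := fun h => absurd (congrFun h 25) (by decide)
  have hinj : Function.Injective fun t : ℤ => xp + t • switching :=
    (add_right_injective xp).comp (smul_left_injective ℤ hne)
  rw [solutions_eq_image, Set.ncard_image_of_injective _ hinj, Set.ncard_eq_toFinset_card',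
    Set.toFinset_Icc, Int.card_Icc]
  rfl
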